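/- Let I ⊆ ℝ be an interval and A : I → ℝ be twice differentiable with A(t) ≠ 0 for all t ∈ I, satisfying A''(t) = 2(4 + A'(t))(2 − A'(t))/A(t) on I. Then the function t ↦ A(t)⁶·(2 − A'(t))·(4 + A'(t))² is constant on I; in particular, if t₀ ∈ I, its value is μ := A(t₀)⁶(2 − A'(t₀))(4 + A'(t₀))². -/

import Mathlib

/-- Along solutions of John's ODE `A'' = 2(4 + A')(2 - A')/A` on an interval,
the quantity `A⁶ (2 - A') (4 + A')²` is conserved. -/
theorem stmt_2 (I : Set ℝ) (hI : Convex ℝ I) (A A' A'' : ℝ → ℝ)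
    (hA0 : ∀ t ∈ I, A t ≠ 0)
    (hd1 : ∀ t ∈ I, HasDerivWithinAt A (A' t) I t)
    (hd2 : ∀ t ∈ I, HasDerivWithinAt A' (A'' t) I t)
    (hode : ∀ t ∈ I, A'' t = 2 * (4 + A' t) * (2 - A' t) / A t) :
    ∀ t₀ ∈ I, ∀ t ∈ I,
      A t ^ 6 * (2 - A' t) * (4 + A' t) ^ 2
        = A t₀ ^ 6 * (2 - A' t₀) * (4 + A' t₀) ^ 2 := by
  intro t₀ ht₀ t ht
  have hderiv : ∀ s ∈ I, HasDerivWithinAt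
      (fun s => A s ^ 6 * (2 - A' s) * (4 + A' s) ^ 2) 0 I s := by
    intro s hs
    have h := (((hd1 s hs).fun_pow 6).fun_mul ((hd2 s hs).const_sub 2)).fun_mul
      (((hd2 s hs).const_add 4).fun_pow 2)
    refine h.congr_deriv ?_
    have hne := hA0 s hs
    rw [hode s hs]
    field_simp
    push_cast
    ring
  have hbound := hI.norm_image_sub_le_of_norm_hasDerivWithin_le (C := 0) hderiv
    (fun _ _ => norm_zero.le) ht₀ ht
  rw [zero_mul] at hbound
  exact sub_eq_zero.mp (norm_le_zero_iff.mp hbound)
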